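/- Corollary 2.3 (decomposition of the kernel when all but m source parameters coincide). Let 0 ≤ m < N, a > 0 and a₁,…,a_m > 0, and let K_N be the kernel with parameter list (a₁,…,a_m, a, …, a), the value a being repeated N−m times. For n ∈ ℕ and 1 ≤ k ≤ m define ℒ^{(k)}_n(x) := ∫₀^∞ u^{ν₀} e^{−u} Ψ(u;x) (u+a)^n ∏_{l=1}^{k−1}(u+a_l) du and ℒ̃^{(k)}_n(y) := (1/(2πi)) ∮_C e^{v} Φ(v;y) (v+a)^{−n} ∏_{l=1}^{k}(v+a_l)^{−1} dv, where C is a counterclockwise circle contained in {Re v < 0} enclosing −a, −a₁, …, −a_m. Then for all x, y > 0: K_N(x,y) = ∫₀^∞ [(1/(2πi)) ∮_C u^{ν₀} e^{−u+v} Ψ(u;x) Φ(v;y) (u−v)^{−1} ((u+a)/(v+a))^{N−m} dv] du + ∑_{k=1}^m ℒ^{(k)}_{N−m}(x) · ℒ̃^{(k)}_{N−m}(y). -/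

import Mathlib

open MeasureTheory Filter Topology

noncomputable section


/-- Pochhammer symbol `(a)_j` over `ℝ`. -/
def poch (a : ℝ) (j : ℕ) : ℝ := ∏ i ∈ Finset.range j, (a + i)

/-- The hypergeometric function `₀F₁(b; z)` for complex argument `z`. -/
def hyp0F1 (b : ℝ) (z : ℂ) : ℂ :=
  ∑' k : ℕ, (Real.Gamma b : ℂ) * z ^ k /
    ((Nat.factorial k : ℂ) * (Real.Gamma (b + k) : ℂ))

/-- The hypergeometric function `₀F₁(b; z)` for real argument `z`. -/
def hyp0F1R (b z : ℝ) : ℝ :=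
  ∑' k : ℕ, Real.Gamma b * z ^ k / (Nat.factorial k * Real.Gamma (b + k))

/-- The terminating hypergeometric sum `₁F₁(-k; b; u)`. -/
def hyp1F1T (k : ℕ) (b u : ℝ) : ℝ :=
  ∑ j ∈ Finset.range (k + 1),
    poch (-(k : ℝ)) j / (poch b j * Nat.factorial j) * u ^ j

/-- The function `Ψ(u;x)` of the paper. -/
def Psi (r ν0 : ℕ) (ν : Fin r → ℕ) (u x : ℝ) : ℝ :=
  (1 / Real.Gamma ((ν0 : ℝ) + 1)) *
    ∑' k : ℕ, x ^ k / Nat.factorial k * hyp1F1T k ((ν0 : ℝ) + 1) u *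
      ∏ l, 1 / Real.Gamma ((ν l : ℝ) + 1 + k)

/-- The positive orthant in `ℝ^r`. -/
def posOrth (r : ℕ) : Set (Fin r → ℝ) := {t | ∀ i, 0 < t i}

/-- The function `Φ(v;y)` of the paper, complex `v`. -/
def Phi (r ν0 : ℕ) (ν : Fin r → ℕ) (v : ℂ) (y : ℝ) : ℂ :=
  ((1 / Real.Gamma ((ν0 : ℝ) + 1) : ℝ) : ℂ) *
    ∫ t in posOrth r,
      (((∏ i, (t i) ^ ((ν i : ℝ) - 1) * Real.exp (-t i)) *
          (y / ∏ i, t i) ^ ν0 * Real.exp (-(y / ∏ i, t i)) : ℝ) : ℂ) *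
        hyp0F1 ((ν0 : ℝ) + 1) (-(v * ((y / ∏ i, t i : ℝ) : ℂ)))

/-- The function `Φ(v;y)` of the paper, real `v`. -/
def PhiR (r ν0 : ℕ) (ν : Fin r → ℕ) (v y : ℝ) : ℝ :=
  (1 / Real.Gamma ((ν0 : ℝ) + 1)) *
    ∫ t in posOrth r,
      ((∏ i, (t i) ^ ((ν i : ℝ) - 1) * Real.exp (-t i)) *
          (y / ∏ i, t i) ^ ν0 * Real.exp (-(y / ∏ i, t i))) *
        hyp0F1R ((ν0 : ℝ) + 1) (-(v * (y / ∏ i, t i)))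

/-- The double-contour-integral correlation kernel `K_N(x,y)` of Proposition 2.1,
with `C` the counterclockwise circle of center `c` and radius `R`. -/
def KN (r ν0 N : ℕ) (ν : Fin r → ℕ) (a : Fin N → ℝ) (c : ℂ) (R : ℝ) (x y : ℝ) : ℂ :=
  ∫ u in Set.Ioi (0 : ℝ),
    (2 * Real.pi * Complex.I)⁻¹ *
      ∮ v in C(c, R),
        (u : ℂ) ^ ν0 * Complex.exp (-(u : ℂ) + v) * ((Psi r ν0 ν u x : ℝ) : ℂ) *
          Phi r ν0 ν v y * ((u : ℂ) - v)⁻¹ * ∏ l, ((u : ℂ) + (a l : ℂ)) / (v + (a l : ℂ))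

/-- An admissible contour for `K_N`: a counterclockwise circle contained in the left
half-plane which encloses all the points `-a l`. -/
def AdmCircle (N : ℕ) (a : Fin N → ℝ) (c : ℂ) (R : ℝ) : Prop :=
  0 < R ∧ c.re + R < 0 ∧ ∀ l, ‖-(a l : ℂ) - c‖ < R

/-- The Meijer G-function `G^{1,0}_{0,r+2}(—;0,-ν₀,…,-ν_r | z)`, complex argument. -/
def G1 (r ν0 : ℕ) (ν : Fin r → ℕ) (z : ℂ) : ℂ :=
  ∑' k : ℕ, (-z) ^ k /
    ((Nat.factorial k : ℂ) * (Real.Gamma ((ν0 : ℝ) + 1 + k) : ℂ) *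
      ∏ l, (Real.Gamma ((ν l : ℝ) + 1 + k) : ℂ))

/-- The Meijer G-function `G^{1,0}_{0,r+2}(—;0,-ν₀,…,-ν_r | z)`, real argument. -/
def G1R (r ν0 : ℕ) (ν : Fin r → ℕ) (z : ℝ) : ℝ :=
  ∑' k : ℕ, (-z) ^ k /
    (Nat.factorial k * Real.Gamma ((ν0 : ℝ) + 1 + k) *
      ∏ l, Real.Gamma ((ν l : ℝ) + 1 + k))

/-- `g₀(w) = ∑ (-1)^k w^{ν₀+k}/(k! Γ(ν₀+k+1))`, complex argument. -/
def g0C (ν0 : ℕ) (w : ℂ) : ℂ :=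
  ∑' k : ℕ, (-1 : ℂ) ^ k * w ^ (ν0 + k) /
    ((Nat.factorial k : ℂ) * (Real.Gamma ((ν0 : ℝ) + k + 1) : ℂ))

/-- `g₀(w)`, real argument. -/
def g0R (ν0 : ℕ) (w : ℝ) : ℝ :=
  ∑' k : ℕ, (-1 : ℝ) ^ k * w ^ (ν0 + k) /
    (Nat.factorial k * Real.Gamma ((ν0 : ℝ) + k + 1))

/-- The Meijer G-function `G^{r+1,0}_{0,r+2}(—;ν₀,…,ν_r,0 | z)` for `z > 0`, real form. -/
def G2R (r ν0 : ℕ) (ν : Fin r → ℕ) (z : ℝ) : ℝ :=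
  ∫ t in posOrth r,
    (∏ l, (t l) ^ ((ν l : ℝ) - 1) * Real.exp (-t l)) * g0R ν0 (z / ∏ l, t l)

/-- The critical hard-edge kernel `𝒦^{h,r}(ξ,η;τ)` of Theorem 1.2, the inner integral
running up the imaginary axis `v = i t`. -/
def Kcrit (r ν0 : ℕ) (ν : Fin r → ℕ) (G2 : ℂ → ℂ) (τ ξ η : ℝ) : ℂ :=
  (2 * Real.pi * Complex.I)⁻¹ *
    ∫ u in Set.Ioi (0 : ℝ), ∫ t : ℝ,
      ((u : ℂ) / (Complex.I * t)) ^ ν0 *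
        Complex.exp (-(τ : ℂ) * u - (u : ℂ) ^ 2 / 2 + (τ : ℂ) * (Complex.I * t) +
          (Complex.I * t) ^ 2 / 2) *
        ((u : ℂ) - Complex.I * t)⁻¹ * G1 r ν0 ν ((u * ξ : ℝ) : ℂ) *
        G2 (Complex.I * t * (η : ℂ)) * Complex.I

/-- The deformed critical kernel `𝒦^{h,r}_m(ξ,η;τ,σ)` of Theorem 1.3, the inner integral
running up the vertical line `Re v = -c`. -/
def KcritLine (r ν0 m : ℕ) (ν : Fin r → ℕ) (σ : ℕ → ℝ) (G2 : ℂ → ℂ) (c τ ξ η : ℝ) : ℂ :=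
  (2 * Real.pi * Complex.I)⁻¹ *
    ∫ u in Set.Ioi (0 : ℝ), ∫ t : ℝ,
      ((u : ℂ) / (-(c : ℂ) + Complex.I * t)) ^ ν0 *
        Complex.exp (-(τ : ℂ) * u - (u : ℂ) ^ 2 / 2 +
          (τ : ℂ) * (-(c : ℂ) + Complex.I * t) + (-(c : ℂ) + Complex.I * t) ^ 2 / 2) *
        ((u : ℂ) - (-(c : ℂ) + Complex.I * t))⁻¹ *
        (∏ j ∈ Finset.range m,
          ((u : ℂ) + (σ j : ℂ)) / ((-(c : ℂ) + Complex.I * t) + (σ j : ℂ))) *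
        G1 r ν0 ν ((u * ξ : ℝ) : ℂ) * G2 ((-(c : ℂ) + Complex.I * t) * (η : ℂ)) * Complex.I




/-- `Ψ(u;x)` in the case `r = 0`. -/
def Psi0 (ν0 : ℕ) (u x : ℝ) : ℝ :=
  Real.exp x * hyp0F1R ((ν0 : ℝ) + 1) (-(u * x)) / Real.Gamma ((ν0 : ℝ) + 1)

/-- `Φ(v;y)` in the case `r = 0`, complex `v`. -/
def Phi0 (ν0 : ℕ) (v : ℂ) (y : ℝ) : ℂ :=
  ((y ^ ν0 * Real.exp (-y) / Real.Gamma ((ν0 : ℝ) + 1) : ℝ) : ℂ) *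
    hyp0F1 ((ν0 : ℝ) + 1) (-(v * (y : ℂ)))

/-- The kernel `K_N` in the case `r = 0`. -/
def KN0 (ν0 N : ℕ) (a : Fin N → ℝ) (c : ℂ) (R : ℝ) (x y : ℝ) : ℂ :=
  ∫ u in Set.Ioi (0 : ℝ),
    (2 * Real.pi * Complex.I)⁻¹ *
      ∮ v in C(c, R),
        (u : ℂ) ^ ν0 * Complex.exp (-(u : ℂ) + v) * ((Psi0 ν0 u x : ℝ) : ℂ) *
          Phi0 ν0 v y * ((u : ℂ) - v)⁻¹ * ∏ l, ((u : ℂ) + (a l : ℂ)) / (v + (a l : ℂ))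

/-- Laguerre polynomial `L_n^{ν}(x)`. -/
def laguerreL (n νp : ℕ) (x : ℝ) : ℝ :=
  ∑ k ∈ Finset.range (n + 1),
    (-1 : ℝ) ^ k * (Nat.choose (n + νp) (n - k)) * x ^ k / Nat.factorial k

/-- The function `Ψ^{(μ)}(u;x)` of Section 4. -/
def PsiMu (r ν0 : ℕ) (μ ν : Fin r → ℕ) (u x : ℝ) : ℝ :=
  (1 / Real.Gamma ((ν0 : ℝ) + 1)) *
    ∑' k : ℕ, x ^ k / Nat.factorial k * hyp1F1T k ((ν0 : ℝ) + 1) u *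
      ∏ l, Real.Gamma ((μ l : ℝ) + 1 + k) / Real.Gamma ((ν l : ℝ) + 1 + k)

/-- The open unit cube in `ℝ^r`. -/
def unitCube (r : ℕ) : Set (Fin r → ℝ) := {t | ∀ i, 0 < t i ∧ t i < 1}

/-- The function `Φ^{(μ)}(v;y)` of Section 4, complex `v`. -/
def PhiMu (r ν0 : ℕ) (μ ν : Fin r → ℕ) (v : ℂ) (y : ℝ) : ℂ :=
  ((1 / (Real.Gamma ((ν0 : ℝ) + 1) * ∏ l, Real.Gamma ((μ l : ℝ) - (ν l : ℝ))) : ℝ) : ℂ) *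
    ∫ t in unitCube r,
      (((∏ l, (t l) ^ ((ν l : ℝ) - 1) * (1 - t l) ^ ((μ l : ℝ) - (ν l : ℝ) - 1)) *
          (y / ∏ l, t l) ^ ν0 * Real.exp (-(y / ∏ l, t l)) : ℝ) : ℂ) *
        hyp0F1 ((ν0 : ℝ) + 1) (-(v * ((y / ∏ l, t l : ℝ) : ℂ)))

/-- The function `Φ^{(μ)}(v;y)` of Section 4, real `v`. -/
def PhiMuR (r ν0 : ℕ) (μ ν : Fin r → ℕ) (v y : ℝ) : ℝ :=
  (1 / (Real.Gamma ((ν0 : ℝ) + 1) * ∏ l, Real.Gamma ((μ l : ℝ) - (ν l : ℝ)))) *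
    ∫ t in unitCube r,
      ((∏ l, (t l) ^ ((ν l : ℝ) - 1) * (1 - t l) ^ ((μ l : ℝ) - (ν l : ℝ) - 1)) *
          (y / ∏ l, t l) ^ ν0 * Real.exp (-(y / ∏ l, t l))) *
        hyp0F1R ((ν0 : ℝ) + 1) (-(v * (y / ∏ l, t l)))

/-- The kernel `K_N` for the truncated-unitary product of Section 4. -/
def KNmu (r ν0 N : ℕ) (μ ν : Fin r → ℕ) (a : Fin N → ℝ) (c : ℂ) (R : ℝ) (x y : ℝ) : ℂ :=
  ∫ u in Set.Ioi (0 : ℝ),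
    (2 * Real.pi * Complex.I)⁻¹ *
      ∮ v in C(c, R),
        (u : ℂ) ^ ν0 * Complex.exp (-(u : ℂ) + v) * ((PsiMu r ν0 μ ν u x : ℝ) : ℂ) *
          PhiMu r ν0 μ ν v y * ((u : ℂ) - v)⁻¹ * ∏ l, ((u : ℂ) + (a l : ℂ)) / (v + (a l : ℂ))

/-- Mixed domain `(0,1)^q × (0,∞)^{r-q}`. -/
def mixedSet (r q : ℕ) : Set (Fin r → ℝ) := {t | ∀ l, 0 < t l ∧ ((l : ℕ) < q → t l < 1)}

/-- The Meijer G-function `G^{1,q}_{q,r+2}(-μ₁,…,-μ_q; 0,-ν₀,…,-ν_r | z)`, real form. -/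
def G1qR (r ν0 q : ℕ) (μ ν : Fin r → ℕ) (z : ℝ) : ℝ :=
  ∑' k : ℕ, (-z) ^ k *
    (∏ l ∈ Finset.univ.filter fun l : Fin r => (l : ℕ) < q, Real.Gamma ((μ l : ℝ) + 1 + k)) /
    (Nat.factorial k * Real.Gamma ((ν0 : ℝ) + 1 + k) *
      ∏ l, Real.Gamma ((ν l : ℝ) + 1 + k))

/-- The Meijer G-function `G^{1,q}_{q,r+2}(-μ₁,…,-μ_q; 0,-ν₀,…,-ν_r | z)`, complex form. -/
def G1q (r ν0 q : ℕ) (μ ν : Fin r → ℕ) (z : ℂ) : ℂ :=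
  ∑' k : ℕ, (-z) ^ k *
    ((∏ l ∈ Finset.univ.filter fun l : Fin r => (l : ℕ) < q,
      Real.Gamma ((μ l : ℝ) + 1 + k) : ℝ) : ℂ) /
    ((Nat.factorial k : ℂ) * (Real.Gamma ((ν0 : ℝ) + 1 + k) : ℂ) *
      ∏ l, (Real.Gamma ((ν l : ℝ) + 1 + k) : ℂ))

/-- The Meijer G-function `G^{r+1,0}_{q,r+2}(μ₁,…,μ_q; ν₀,…,ν_r,0 | z)` for `z > 0`. -/
def G2qR (r ν0 q : ℕ) (μ ν : Fin r → ℕ) (z : ℝ) : ℝ :=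
  ∫ t in mixedSet r q,
    (∏ l : Fin r, if l.val < q then
        (t l) ^ ((ν l : ℝ) - 1) * (1 - t l) ^ ((μ l : ℝ) - (ν l : ℝ) - 1) /
          Real.Gamma ((μ l : ℝ) - (ν l : ℝ))
      else (t l) ^ ((ν l : ℝ) - 1) * Real.exp (-t l)) *
      g0R ν0 (z / ∏ l, t l)

/-! Write `K_N` as an iterated integral of
`(weight in u) · (function of v) · (u - v)⁻¹ · ∏_{l < m} (u + σ_l) / (v + σ_l)`, the `N - m` equal
parameters being absorbed into the weight and the function.  A telescoping identity expands
`(u - v)⁻¹ ∏ (u + σ_l) / (v + σ_l)` as `(u - v)⁻¹` plus a sum of `m` products of a polynomial in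
`u` and a rational function of `v`; on such products the double integral factorizes.

Splitting the integral needs absolute convergence.  In `u` it follows from the bound
`|Ψ(u;x)| ≤ C e^{|u|/2}`, which leaves the weight `u^{ν₀} e^{-u} Ψ(u;x)` with finite moments, and
from the positive distance between `[0, ∞)` and the contour.  In `v` it follows from the
continuity of `Φ(·;y)`, by dominated convergence. -/

section Series

lemma continuous_tsum_of_norm_le_mul {X ι E : Type*} [TopologicalSpace X] [NormedAddCommGroup E]
    [CompleteSpace E] {f : ι → X → E} {a : ι → ℝ} {g : X → ℝ} (hf : ∀ i, Continuous (f i))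
    (ha : Summable a) (ha₀ : ∀ i, 0 ≤ a i) (hg : Continuous g)
    (hfa : ∀ i x, ‖f i x‖ ≤ a i * g x) : Continuous fun x => ∑' i, f i x := by
  refine continuous_iff_continuousAt.2 fun x₀ => ?_
  have hopen : IsOpen {x | g x < g x₀ + 1} := isOpen_lt hg continuous_const
  refine ContinuousOn.continuousAt (s := {x | g x < g x₀ + 1}) ?_
    (hopen.mem_nhds (lt_add_one (g x₀)))
  refine continuousOn_tsum (fun i => (hf i).continuousOn) (ha.mul_right (g x₀ + 1)) ?_
  exact fun i x hx => (hfa i x).trans (mul_le_mul_of_nonneg_left (le_of_lt hx) (ha₀ i))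

lemma norm_tsum_le_exp_mul {E : Type*} [NormedAddCommGroup E] {f : ℕ → E} {p C : ℝ}
    (hf : ∀ k, ‖f k‖ ≤ p ^ k / k.factorial * C) : ‖∑' k, f k‖ ≤ Real.exp p * C := by
  have hexp : HasSum (fun k : ℕ => p ^ k / k.factorial) (Real.exp p) := by
    rw [Real.exp_eq_exp_ℝ]
    exact NormedSpace.expSeries_div_hasSum_exp p
  exact tsum_of_norm_bounded (hexp.mul_right C) hf

end Series

section Pochhammer

lemma factorial_le_poch {b : ℝ} (hb : 1 ≤ b) (k : ℕ) : (k.factorial : ℝ) ≤ poch b k := by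
  rw [← Finset.prod_range_add_one_eq_factorial, Nat.cast_prod]
  refine Finset.prod_le_prod (fun i _ => by positivity) fun i _ => ?_
  push_cast
  linarith

lemma poch_neg_natCast (k j : ℕ) :
    poch (-(k : ℝ)) j = (-1) ^ j * (j.factorial * k.choose j : ℕ) := by
  rw [← Nat.descFactorial_eq_factorial_mul_choose, ← descPochhammer_eval_eq_descFactorial,
    descPochhammer_eval_eq_prod_range, poch]
  simpa [neg_add_eq_sub] using
    Finset.prod_neg (s := Finset.range j) (fun i : ℕ => (k : ℝ) - i)

lemma Gamma_add_natCast {b : ℝ} (hb : 0 < b) (k : ℕ) :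
    Real.Gamma (b + k) = Real.Gamma b * poch b k := by
  induction k with
  | zero => simp [poch]
  | succ k ih =>
    rw [Nat.cast_succ, ← add_assoc, Real.Gamma_add_one (by positivity), ih, poch, poch,
      Finset.prod_range_succ]
    ring

lemma one_le_Gamma_natCast_add_one (n : ℕ) : 1 ≤ Real.Gamma ((n : ℝ) + 1) := by
  rw [Real.Gamma_nat_eq_factorial]
  exact_mod_cast n.factorial_pos

end Pochhammer

section HypergeometricBounds

lemma norm_hyp0F1_term_le {b : ℝ} (hb : 1 ≤ b) {p q : ℝ} (hp : 0 ≤ p) (hq : 0 ≤ q) {z : ℂ}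
    (hz : ‖z‖ ≤ p * q) (k : ℕ) :
    ‖(Real.Gamma b : ℂ) * z ^ k / ((k.factorial : ℂ) * (Real.Gamma (b + k) : ℂ))‖ ≤
      p ^ k / k.factorial * Real.exp q := by
  have hΓ : 0 < Real.Gamma b := Real.Gamma_pos_of_pos (by linarith)
  have hk : (0 : ℝ) < k.factorial := by positivity
  have hpoch : 0 < poch b k := hk.trans_le (factorial_le_poch hb k)
  have hnorm : ‖(Real.Gamma b : ℂ) * z ^ k / ((k.factorial : ℂ) * (Real.Gamma (b + k) : ℂ))‖ =
      ‖z‖ ^ k / (k.factorial * poch b k) := by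
    rw [Gamma_add_natCast (by linarith)]
    simp only [norm_div, norm_mul, norm_pow, Complex.norm_natCast, Complex.norm_real,
      Real.norm_of_nonneg hΓ.le, Real.norm_of_nonneg hpoch.le, Complex.ofReal_mul]
    field_simp
  calc ‖(Real.Gamma b : ℂ) * z ^ k / ((k.factorial : ℂ) * (Real.Gamma (b + k) : ℂ))‖
      = ‖z‖ ^ k / (k.factorial * poch b k) := hnorm
    _ ≤ (p * q) ^ k / (k.factorial * k.factorial) := by
        gcongr
        exact factorial_le_poch hb k
    _ = p ^ k / k.factorial * (q ^ k / k.factorial) := by rw [mul_pow, mul_div_mul_comm]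
    _ ≤ p ^ k / k.factorial * Real.exp q := by
        gcongr
        exact Real.pow_div_factorial_le_exp q hq k

lemma norm_hyp0F1_le {b : ℝ} (hb : 1 ≤ b) {p q : ℝ} (hp : 0 ≤ p) (hq : 0 ≤ q) {z : ℂ}
    (hz : ‖z‖ ≤ p * q) : ‖hyp0F1 b z‖ ≤ Real.exp p * Real.exp q :=
  norm_tsum_le_exp_mul (norm_hyp0F1_term_le hb hp hq hz)

lemma continuous_hyp0F1 {b : ℝ} (hb : 1 ≤ b) : Continuous (hyp0F1 b) :=
  continuous_tsum_of_norm_le_mul (fun k => by fun_prop) (Real.summable_pow_div_factorial 1)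
    (fun k => by positivity) (Real.continuous_exp.comp continuous_norm)
    fun k z => norm_hyp0F1_term_le hb zero_le_one (norm_nonneg z) (one_mul ‖z‖).ge k

lemma abs_hyp1F1T_le {b : ℝ} (hb : 1 ≤ b) (k : ℕ) (u : ℝ) :
    |hyp1F1T k b u| ≤ 3 ^ k * Real.exp (|u| / 2) := by
  have hterm (j : ℕ) : |poch (-(k : ℝ)) j / (poch b j * j.factorial) * u ^ j| ≤
      2 ^ j * k.choose j * Real.exp (|u| / 2) := by
    have hpoch : 0 < poch b j := (Nat.cast_pos.2 j.factorial_pos).trans_le (factorial_le_poch hb j)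
    calc |poch (-(k : ℝ)) j / (poch b j * j.factorial) * u ^ j|
        = k.choose j * |u| ^ j / poch b j := by
          rw [poch_neg_natCast]
          simp only [abs_mul, abs_div, abs_pow, abs_neg, abs_one, one_pow, one_mul, Nat.abs_cast,
            abs_of_pos hpoch]
          push_cast
          field_simp
      _ ≤ k.choose j * |u| ^ j / j.factorial := by
          gcongr
          exact factorial_le_poch hb j
      _ = 2 ^ j * k.choose j * ((|u| / 2) ^ j / j.factorial) := by
          rw [div_pow]
          field_simp
      _ ≤ 2 ^ j * k.choose j * Real.exp (|u| / 2) := by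
          gcongr
          exact Real.pow_div_factorial_le_exp _ (by positivity) j
  calc |hyp1F1T k b u|
      ≤ ∑ j ∈ Finset.range (k + 1), 2 ^ j * k.choose j * Real.exp (|u| / 2) :=
        (Finset.abs_sum_le_sum_abs _ _).trans (Finset.sum_le_sum fun j _ => hterm j)
    _ = 3 ^ k * Real.exp (|u| / 2) := by
        rw [← Finset.sum_mul, show (3 : ℝ) = 2 + 1 by norm_num, add_pow]
        simp only [one_pow, mul_one]

end HypergeometricBounds

section Psi

variable (r ν0 : ℕ) (ν : Fin r → ℕ)

lemma norm_Psi_term_le (u x : ℝ) (k : ℕ) :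
    ‖x ^ k / k.factorial * hyp1F1T k ((ν0 : ℝ) + 1) u *
      ∏ l, 1 / Real.Gamma ((ν l : ℝ) + 1 + k)‖ ≤
      (3 * |x|) ^ k / k.factorial * Real.exp (|u| / 2) := by
  have hΓ (l : Fin r) : 1 ≤ Real.Gamma ((ν l : ℝ) + 1 + k) := by
    rw [add_right_comm, ← Nat.cast_add]
    exact one_le_Gamma_natCast_add_one _
  have hprod : |∏ l, 1 / Real.Gamma ((ν l : ℝ) + 1 + k)| ≤ 1 := by
    rw [Finset.abs_prod]
    refine Finset.prod_le_one (fun l _ => abs_nonneg _) fun l _ => ?_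
    rw [abs_of_nonneg (by have := hΓ l; positivity)]
    exact div_le_one_of_le₀ (hΓ l) (by linarith [hΓ l])
  have hF := abs_hyp1F1T_le (b := (ν0 : ℝ) + 1) (by simp) k u
  calc ‖x ^ k / k.factorial * hyp1F1T k ((ν0 : ℝ) + 1) u *
        ∏ l, 1 / Real.Gamma ((ν l : ℝ) + 1 + k)‖
      = |x| ^ k / k.factorial * |hyp1F1T k ((ν0 : ℝ) + 1) u| *
        |∏ l, 1 / Real.Gamma ((ν l : ℝ) + 1 + k)| := by
        simp only [Real.norm_eq_abs, abs_mul, abs_div, abs_pow, Nat.abs_cast]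
    _ ≤ |x| ^ k / k.factorial * (3 ^ k * Real.exp (|u| / 2)) * 1 := by gcongr
    _ = (3 * |x|) ^ k / k.factorial * Real.exp (|u| / 2) := by rw [mul_pow]; ring

lemma abs_Psi_le (u x : ℝ) :
    |Psi r ν0 ν u x| ≤ Real.exp (3 * |x|) * Real.exp (|u| / 2) := by
  have hΓ := one_le_Gamma_natCast_add_one ν0
  rw [Psi, abs_mul, abs_of_nonneg (by positivity)]
  exact (mul_le_of_le_one_left (abs_nonneg _) (div_le_one_of_le₀ hΓ (by positivity))).trans
    (norm_tsum_le_exp_mul (norm_Psi_term_le r ν0 ν u x))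

lemma continuous_Psi (x : ℝ) : Continuous fun u => Psi r ν0 ν u x := by
  refine continuous_const.mul (continuous_tsum_of_norm_le_mul (fun k => ?_)
    (Real.summable_pow_div_factorial (3 * |x|)) (fun k => by positivity)
    (g := fun u => Real.exp (|u| / 2)) (by fun_prop)
    fun k u => norm_Psi_term_le r ν0 ν u x k)
  unfold hyp1F1T
  fun_prop

lemma integrableOn_Psi_weight_mul_pow (x : ℝ) (n : ℕ) :
    IntegrableOn (fun u => u ^ ν0 * Real.exp (-u) * Psi r ν0 ν u x * u ^ n) (Set.Ioi 0) := by
  have hdom : IntegrableOn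
      (fun u : ℝ => Real.exp (3 * |x|) * (u ^ (ν0 + n) * Real.exp (-(1 / 2) * u))) (Set.Ioi 0) := by
    have h := integrableOn_rpow_mul_exp_neg_mul_rpow (p := 1) (s := ((ν0 + n : ℕ) : ℝ))
      (b := 1 / 2) (neg_one_lt_zero.trans_le (Nat.cast_nonneg _)) one_pos (by norm_num)
    simp only [Real.rpow_natCast, Real.rpow_one] at h
    exact h.const_mul _
  have hcont := continuous_Psi r ν0 ν x
  refine hdom.mono' (by fun_prop) ?_
  filter_upwards [ae_restrict_mem measurableSet_Ioi] with u (hu : 0 < u)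
  calc ‖u ^ ν0 * Real.exp (-u) * Psi r ν0 ν u x * u ^ n‖
      = u ^ ν0 * Real.exp (-u) * |Psi r ν0 ν u x| * u ^ n := by
        simp only [norm_mul, norm_pow, Real.norm_eq_abs, abs_of_pos hu, Real.abs_exp]
    _ ≤ u ^ ν0 * Real.exp (-u) * (Real.exp (3 * |x|) * Real.exp (|u| / 2)) * u ^ n := by
        gcongr
        exact abs_Psi_le r ν0 ν u x
    _ = Real.exp (3 * |x|) * (u ^ (ν0 + n) * Real.exp (-(1 / 2) * u)) := by
        rw [abs_of_pos hu, show -(1 / 2) * u = -u + u / 2 by ring, Real.exp_add, pow_add]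
        ring

end Psi

section Phi

lemma posOrth_eq_pi (r : ℕ) : posOrth r = Set.univ.pi fun _ => Set.Ioi 0 := by
  ext t
  simp only [posOrth, Set.mem_ofPred_eq, Set.mem_univ_pi, Set.mem_Ioi]

lemma measurableSet_posOrth (r : ℕ) : MeasurableSet (posOrth r) := by
  rw [posOrth_eq_pi]
  exact MeasurableSet.univ_pi fun _ => measurableSet_Ioi

lemma integrableOn_posOrth_prod {r : ℕ} {f : Fin r → ℝ → ℝ}
    (hf : ∀ i, IntegrableOn (f i) (Set.Ioi 0)) :
    IntegrableOn (fun t => ∏ i, f i (t i)) (posOrth r) := by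
  rw [posOrth_eq_pi, IntegrableOn, volume_pi, Measure.restrict_pi_pi]
  exact Integrable.fintype_prod hf

lemma pow_mul_exp_neg_half_le (n : ℕ) {w : ℝ} (hw : 0 < w) :
    w ^ n * Real.exp (-(w / 2)) ≤ (n + 1).factorial * 2 ^ (n + 1) / w := by
  have h := Real.pow_div_factorial_le_exp (w / 2) (by positivity) (n + 1)
  rw [Real.exp_neg, ← div_eq_mul_inv, div_le_div_iff₀ (Real.exp_pos _) hw, ← pow_succ]
  rwa [div_pow, div_div, div_le_iff₀ (by positivity), mul_comm, mul_comm (2 ^ _)] at h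

lemma norm_pow_mul_exp_neg_mul_hyp0F1_le {b : ℝ} (hb : 1 ≤ b) (n : ℕ) (v : ℂ) {w : ℝ}
    (hw : 0 < w) :
    w ^ n * Real.exp (-w) * ‖hyp0F1 b (-(v * w))‖ ≤
      (n + 1).factorial * 2 ^ (n + 1) * Real.exp (2 * ‖v‖) / w := by
  have hF : ‖hyp0F1 b (-(v * w))‖ ≤ Real.exp (2 * ‖v‖) * Real.exp (w / 2) := by
    refine norm_hyp0F1_le hb (by positivity) (by positivity) (le_of_eq ?_)
    rw [norm_neg, norm_mul, Complex.norm_real, Real.norm_of_nonneg hw.le]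
    ring
  calc w ^ n * Real.exp (-w) * ‖hyp0F1 b (-(v * w))‖
      ≤ w ^ n * Real.exp (-w) * (Real.exp (2 * ‖v‖) * Real.exp (w / 2)) := by gcongr
    _ = w ^ n * Real.exp (-(w / 2)) * Real.exp (2 * ‖v‖) := by
        rw [show -(w / 2) = -w + w / 2 by ring, Real.exp_add]
        ring
    _ ≤ (n + 1).factorial * 2 ^ (n + 1) / w * Real.exp (2 * ‖v‖) := by
        gcongr
        exact pow_mul_exp_neg_half_le n hw
    _ = (n + 1).factorial * 2 ^ (n + 1) * Real.exp (2 * ‖v‖) / w := by ring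

/-- The integrand of `Φ(v;y)` over `(0,∞)^r`, without the prefactor `1/Γ(ν₀+1)`. -/
def phiIntegrand {r : ℕ} (ν0 : ℕ) (ν : Fin r → ℕ) (v : ℂ) (y : ℝ) (t : Fin r → ℝ) : ℂ :=
  (((∏ i, (t i) ^ ((ν i : ℝ) - 1) * Real.exp (-t i)) *
      (y / ∏ i, t i) ^ ν0 * Real.exp (-(y / ∏ i, t i)) : ℝ) : ℂ) *
    hyp0F1 ((ν0 : ℝ) + 1) (-(v * ((y / ∏ i, t i : ℝ) : ℂ)))

namespace phiIntegrand

variable {r : ℕ} (ν0 : ℕ) (ν : Fin r → ℕ)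

protected lemma measurable (v : ℂ) (y : ℝ) : Measurable (phiIntegrand ν0 ν v y) := by
  have hF : Measurable (hyp0F1 ((ν0 : ℝ) + 1)) := (continuous_hyp0F1 (by simp)).measurable
  unfold phiIntegrand
  fun_prop

protected lemma continuous (y : ℝ) (t : Fin r → ℝ) :
    Continuous fun v => phiIntegrand ν0 ν v y t := by
  have hF : Continuous (hyp0F1 ((ν0 : ℝ) + 1)) := continuous_hyp0F1 (by simp)
  unfold phiIntegrand
  fun_prop

lemma norm_le (v : ℂ) {y : ℝ} (hy : 0 < y) {t : Fin r → ℝ} (ht : t ∈ posOrth r) :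
    ‖phiIntegrand ν0 ν v y t‖ ≤ (ν0 + 1).factorial * 2 ^ (ν0 + 1) * Real.exp (2 * ‖v‖) / y *
      ∏ i, Real.exp (-t i) * (t i) ^ (ν i : ℝ) := by
  have ht (i : Fin r) : 0 < t i := ht i
  set T := ∏ i, t i with hT_def
  set A := ∏ i, (t i) ^ ((ν i : ℝ) - 1) * Real.exp (-t i) with hA_def
  have hT : 0 < T := Finset.prod_pos fun i _ => ht i
  have hA : 0 ≤ A := Finset.prod_nonneg fun i _ => by have := ht i; positivity
  have hAT : A * T = ∏ i, Real.exp (-t i) * (t i) ^ (ν i : ℝ) := by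
    rw [hA_def, hT_def, ← Finset.prod_mul_distrib]
    refine Finset.prod_congr rfl fun i _ => ?_
    rw [Real.rpow_sub_one (ht i).ne']
    field_simp [(ht i).ne']
  have hw : 0 < y / T := by positivity
  calc ‖phiIntegrand ν0 ν v y t‖
      = A * ((y / T) ^ ν0 * Real.exp (-(y / T)) *
          ‖hyp0F1 ((ν0 : ℝ) + 1) (-(v * ((y / T : ℝ) : ℂ)))‖) := by
        rw [phiIntegrand, norm_mul, Complex.norm_real, Real.norm_of_nonneg (by positivity)]
        ring
    _ ≤ A * ((ν0 + 1).factorial * 2 ^ (ν0 + 1) * Real.exp (2 * ‖v‖) / (y / T)) := by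
        gcongr
        exact norm_pow_mul_exp_neg_mul_hyp0F1_le (by simp) ν0 v hw
    _ = (ν0 + 1).factorial * 2 ^ (ν0 + 1) * Real.exp (2 * ‖v‖) / y * (A * T) := by
        field_simp
    _ = _ := by rw [hAT]

end phiIntegrand

lemma continuous_Phi (r ν0 : ℕ) (ν : Fin r → ℕ) {y : ℝ} (hy : 0 < y) :
    Continuous fun v => Phi r ν0 ν v y := by
  refine continuous_const.mul (continuous_iff_continuousAt.2 fun v₀ => ?_)
  have hnear : ∀ᶠ v in 𝓝 v₀, ‖v‖ < ‖v₀‖ + 1 :=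
    continuous_norm.continuousAt.eventually_lt continuousAt_const (lt_add_one _)
  have hdom : IntegrableOn (fun t : Fin r → ℝ =>
      ∏ i, Real.exp (-t i) * (t i) ^ (ν i : ℝ)) (posOrth r) :=
    integrableOn_posOrth_prod fun i => by
      have hΓ := Real.GammaIntegral_convergent (s := (ν i : ℝ) + 1) (by positivity)
      simpa only [add_sub_cancel_right] using hΓ
  refine continuousAt_of_dominated (F := fun v t => phiIntegrand ν0 ν v y t)
    (.of_forall fun v => (phiIntegrand.measurable ν0 ν v y).aestronglyMeasurable) ?_
    (hdom.const_mul ((ν0 + 1).factorial * 2 ^ (ν0 + 1) * Real.exp (2 * (‖v₀‖ + 1)) / y))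
    (.of_forall fun t => (phiIntegrand.continuous ν0 ν y t).continuousAt)
  filter_upwards [hnear] with v hv
  filter_upwards [ae_restrict_mem (measurableSet_posOrth r)] with t ht
  have ht₀ (i : Fin r) : 0 < t i := ht i
  refine (phiIntegrand.norm_le ν0 ν v hy ht).trans ?_
  have : 0 ≤ ∏ i, Real.exp (-t i) * (t i) ^ (ν i : ℝ) :=
    Finset.prod_nonneg fun i _ => by have := ht₀ i; positivity
  gcongr

end Phi

section ContourIntegrals

lemma exists_pos_forall_le_norm_sub {E : Type*} [SeminormedAddCommGroup E] {K L : Set E}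
    (hK : IsCompact K) (hL : IsClosed L) (hKL : Disjoint K L) :
    ∃ δ > 0, ∀ x ∈ K, ∀ y ∈ L, δ ≤ ‖y - x‖ := by
  obtain ⟨δ, hδ, h⟩ := Metric.exists_pos_forall_lt_edist hK hL hKL
  refine ⟨δ, hδ, fun x hx y hy => ?_⟩
  have := (h x hx y hy).le
  rwa [edist_comm, edist_nndist, ENNReal.coe_le_coe, ← NNReal.coe_le_coe, coe_nndist,
    dist_eq_norm] at this

lemma continuousOn_circleIntegral {X E : Type*} [TopologicalSpace X] [NormedAddCommGroup E]
    [NormedSpace ℂ E] {f : X → ℂ → E} {s : Set X} {c : ℂ} {R : ℝ} (hR : 0 ≤ R)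
    (hf : ContinuousOn f.uncurry (s ×ˢ Metric.sphere c R)) :
    ContinuousOn (fun x => ∮ v in C(c, R), f x v) s := by
  rw [continuousOn_iff_continuous_domRestrict]
  refine intervalIntegral.continuous_parametric_intervalIntegral_of_continuous' ?_ _ _
  have hcomp : Continuous fun p : s × ℝ => f p.1 (circleMap c R p.2) :=
    hf.comp_continuous (f := fun p : s × ℝ => ((p.1 : X), circleMap c R p.2)) (by fun_prop)
      fun p => ⟨p.1.2, circleMap_mem_sphere c hR p.2⟩
  simp only [deriv_circleMap]
  exact Continuous.smul (by fun_prop) hcomp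

variable {s : Set ℝ} {c : ℂ} {R : ℝ} {F : ℂ → ℂ}

lemma sub_ne_zero_of_forall_notMem_sphere
    (hsep : ∀ u ∈ closure s, (u : ℂ) ∉ Metric.sphere c R) {u : ℝ} (hu : u ∈ s) {v : ℂ}
    (hv : v ∈ Metric.sphere c R) : (u : ℂ) - v ≠ 0 :=
  sub_ne_zero.2 fun h => hsep u (subset_closure hu) (h ▸ hv)

lemma integrableOn_mul_cauchyIntegral {φ : ℝ → ℂ} (hs : MeasurableSet s)
    (hφ : IntegrableOn φ s) (hR : 0 ≤ R) (hF : ContinuousOn F (Metric.sphere c R))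
    (hsep : ∀ u ∈ closure s, (u : ℂ) ∉ Metric.sphere c R) :
    IntegrableOn (fun u => φ u * ∮ v in C(c, R), F v * ((u : ℂ) - v)⁻¹) s := by
  have hcont : ContinuousOn (fun u : ℝ => ∮ v in C(c, R), F v * ((u : ℂ) - v)⁻¹) s := by
    refine continuousOn_circleIntegral hR ((hF.comp continuousOn_snd fun p hp => hp.2).mul ?_)
    exact ContinuousOn.inv₀ (by fun_prop)
      fun p hp => sub_ne_zero_of_forall_notMem_sphere hsep hp.1 hp.2
  obtain ⟨B, hB⟩ := (isCompact_sphere c R).exists_bound_of_continuousOn hF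
  obtain ⟨δ, hδ, hdist⟩ := exists_pos_forall_le_norm_sub (isCompact_sphere c R)
    (Complex.isometry_ofReal.isClosedEmbedding.isClosedMap _ (isClosed_closure (s := s)))
    (Set.disjoint_right.2 (Set.forall_mem_image.2 hsep))
  refine hφ.mul_bdd (c := 2 * Real.pi * R * (B * δ⁻¹)) (hcont.aestronglyMeasurable hs) ?_
  filter_upwards [ae_restrict_mem hs] with u hu
  refine circleIntegral.norm_integral_le_of_norm_le_const hR fun v hv => ?_
  rw [norm_mul, norm_inv]
  have hB₀ : 0 ≤ B := (norm_nonneg _).trans (hB v hv)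
  gcongr
  · exact hB v hv
  · exact hdist v hv u (Set.mem_image_of_mem _ (subset_closure hu))

lemma integral_circleIntegral_add_sum_mul {α ι : Type*} [MeasurableSpace α] {μ : Measure α}
    {G : α → ℂ → ℂ} {I : Finset ι} {p : ι → α → ℂ} {q : ι → ℂ → ℂ}
    (hG : ∀ᵐ u ∂μ, CircleIntegrable (G u) c R) (hG' : Integrable (fun u => ∮ v in C(c, R), G u v) μ)
    (hp : ∀ k ∈ I, Integrable (p k) μ) (hq : ∀ k ∈ I, CircleIntegrable (q k) c R) (κ : ℂ) :
    ∫ u, κ * (∮ v in C(c, R), (G u v + ∑ k ∈ I, p k u * q k v)) ∂μ =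
      (∫ u, κ * (∮ v in C(c, R), G u v) ∂μ) +
        ∑ k ∈ I, (∫ u, p k u ∂μ) * (κ * ∮ v in C(c, R), q k v) := by
  have hinner : ∀ᵐ u ∂μ, κ * (∮ v in C(c, R), (G u v + ∑ k ∈ I, p k u * q k v)) =
      κ * (∮ v in C(c, R), G u v) + ∑ k ∈ I, p k u * (κ * ∮ v in C(c, R), q k v) := by
    filter_upwards [hG] with u hu
    have hpq : ∀ k ∈ I, CircleIntegrable (fun v => p k u * q k v) c R :=
      fun k hk => (hq k hk).const_mul (p k u)
    rw [circleIntegral.integral_add hu (CircleIntegrable.fun_sum I hpq),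
      circleIntegral.integral_fun_sum hpq, mul_add, Finset.mul_sum]
    simp only [circleIntegral.integral_const_mul, mul_left_comm κ]
  have hpI : ∀ k ∈ I, Integrable (fun u => p k u * (κ * ∮ v in C(c, R), q k v)) μ :=
    fun k hk => (hp k hk).mul_const _
  rw [integral_congr_ae hinner, integral_add (hG'.const_mul κ) (integrable_finsetSum I hpI),
    integral_finsetSum I hpI]
  simp only [integral_mul_const]

end ContourIntegrals

section KernelDecomposition

lemma inv_sub_mul_prod_div_eq_add_sum {K : Type*} [Field K] (m : ℕ) (σ : ℕ → K) {u v : K}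
    (huv : u - v ≠ 0) (hv : ∀ l < m, v + σ l ≠ 0) :
    (u - v)⁻¹ * ∏ l ∈ Finset.range m, (u + σ l) / (v + σ l) =
      (u - v)⁻¹ + ∑ k ∈ Finset.range m,
        (∏ l ∈ Finset.range k, (u + σ l)) * ∏ l ∈ Finset.range (k + 1), (v + σ l)⁻¹ := by
  induction m with
  | zero => simp
  | succ m ih =>
    have hm : v + σ m ≠ 0 := hv m m.lt_succ_self
    have hprod : ∏ l ∈ Finset.range m, (v + σ l) ≠ 0 :=
      Finset.prod_ne_zero_iff.2 fun l hl => hv l ((Finset.mem_range.1 hl).trans m.lt_succ_self)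
    rw [Finset.sum_range_succ, ← add_assoc, ← ih fun l hl => hv l (hl.trans m.lt_succ_self)]
    simp only [Finset.prod_range_succ, Finset.prod_div_distrib, Finset.prod_inv_distrib]
    field_simp
    ring

lemma integrable_mul_polynomial_eval {μ : Measure ℝ} {φ : ℝ → ℂ}
    (hφ : ∀ n : ℕ, Integrable (fun u => φ u * (u : ℂ) ^ n) μ) (p : Polynomial ℂ) :
    Integrable (fun u : ℝ => φ u * p.eval (u : ℂ)) μ := by
  simp only [Polynomial.eval_eq_sum_range, Finset.mul_sum, mul_left_comm (φ _)]
  exact integrable_finsetSum _ fun n _ => (hφ n).const_mul _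

lemma integrable_mul_prod_add {ι : Type*} {μ : Measure ℝ} {φ : ℝ → ℂ}
    (hφ : ∀ n : ℕ, Integrable (fun u => φ u * (u : ℂ) ^ n) μ) (I : Finset ι) (σ : ι → ℂ) :
    Integrable (fun u : ℝ => φ u * ∏ l ∈ I, ((u : ℂ) + σ l)) μ := by
  have h := integrable_mul_polynomial_eval hφ (∏ l ∈ I, (Polynomial.X + Polynomial.C (σ l)))
  simpa only [Polynomial.eval_prod, Polynomial.eval_add, Polynomial.eval_X, Polynomial.eval_C]
    using h

theorem integral_circleIntegral_cauchy_mul_prod_div {s : Set ℝ} (hs : MeasurableSet s) {c : ℂ}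
    {R : ℝ} (hR : 0 ≤ R) (hsep : ∀ u ∈ closure s, (u : ℂ) ∉ Metric.sphere c R) {φ : ℝ → ℂ}
    (hφ : ∀ n : ℕ, IntegrableOn (fun u => φ u * (u : ℂ) ^ n) s) {F : ℂ → ℂ}
    (hF : ContinuousOn F (Metric.sphere c R)) (m : ℕ) {σ : ℕ → ℂ}
    (hσ : ∀ l < m, -σ l ∉ Metric.sphere c R) (κ : ℂ) :
    (∫ u in s, κ * ∮ v in C(c, R), φ u * F v * ((u : ℂ) - v)⁻¹ *
        ∏ l ∈ Finset.range m, ((u : ℂ) + σ l) / (v + σ l)) =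
      (∫ u in s, κ * ∮ v in C(c, R), φ u * F v * ((u : ℂ) - v)⁻¹) +
        ∑ k ∈ Finset.range m, (∫ u in s, φ u * ∏ l ∈ Finset.range k, ((u : ℂ) + σ l)) *
          (κ * ∮ v in C(c, R), F v * ∏ l ∈ Finset.range (k + 1), (v + σ l)⁻¹) := by
  have hv : ∀ l < m, ∀ v ∈ Metric.sphere c R, v + σ l ≠ 0 :=
    fun l hl v hv h => hσ l hl (eq_neg_of_add_eq_zero_left h ▸ hv)
  have hexpand : ∀ u ∈ s, κ * (∮ v in C(c, R), φ u * F v * ((u : ℂ) - v)⁻¹ *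
        ∏ l ∈ Finset.range m, ((u : ℂ) + σ l) / (v + σ l)) =
      κ * ∮ v in C(c, R), (φ u * F v * ((u : ℂ) - v)⁻¹ + ∑ k ∈ Finset.range m,
        (φ u * ∏ l ∈ Finset.range k, ((u : ℂ) + σ l)) *
          (F v * ∏ l ∈ Finset.range (k + 1), (v + σ l)⁻¹)) := fun u hu => by
    congr 1
    refine circleIntegral.integral_congr hR fun v hvs => ?_
    rw [mul_assoc, inv_sub_mul_prod_div_eq_add_sum m σ
      (sub_ne_zero_of_forall_notMem_sphere hsep hu hvs) fun l hl => hv l hl v hvs, mul_add,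
      Finset.mul_sum]
    simp only [mul_mul_mul_comm (φ u)]
  rw [setIntegral_congr_fun hs hexpand]
  refine integral_circleIntegral_add_sum_mul
    (G := fun u v => φ u * F v * ((u : ℂ) - v)⁻¹)
    (p := fun k u => φ u * ∏ l ∈ Finset.range k, ((u : ℂ) + σ l))
    (q := fun k v => F v * ∏ l ∈ Finset.range (k + 1), (v + σ l)⁻¹)
    ?_ ?_ (fun k _ => ?_) (fun k hk => ?_) κ
  · filter_upwards [ae_restrict_mem hs] with u hu
    refine ContinuousOn.circleIntegrable hR ((continuousOn_const.mul hF).mul ?_)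
    exact ContinuousOn.inv₀ (by fun_prop)
      fun v hvs => sub_ne_zero_of_forall_notMem_sphere hsep hu hvs
  · simp only [mul_assoc, circleIntegral.integral_const_mul]
    exact integrableOn_mul_cauchyIntegral hs (by simpa using hφ 0) hR hF hsep
  · exact integrable_mul_prod_add hφ _ σ
  · refine ContinuousOn.circleIntegrable hR (hF.mul (continuousOn_finsetProd _ fun l hl => ?_))
    refine ContinuousOn.inv₀ (by fun_prop) (hv l ?_)
    have := Finset.mem_range.1 hl
    have := Finset.mem_range.1 hk
    omega

end KernelDecomposition

section Kernel

lemma prod_fin_ite_lt {M : Type*} [CommMonoid M] {m N : ℕ} (hm : m ≤ N) (f : ℕ → M) (b : M) :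
    ∏ l : Fin N, (if (l : ℕ) < m then f l else b) =
      b ^ (N - m) * ∏ l ∈ Finset.range m, f l := by
  rw [Fin.prod_univ_eq_prod_range (fun l => if l < m then f l else b) N,
    ← Finset.prod_range_mul_prod_Ico _ hm, mul_comm]
  congr 1
  · rw [Finset.prod_congr rfl fun l hl => if_neg (Finset.mem_Ico.1 hl).1.not_gt,
      Finset.prod_const, Nat.card_Ico]
  · exact Finset.prod_congr rfl fun l hl => if_pos (Finset.mem_range.1 hl)

lemma prod_add_div_add_ite_lt {m N : ℕ} (hm : m ≤ N) (σ : ℕ → ℝ) (a0 : ℝ) (u v : ℂ) :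
    ∏ l : Fin N, (u + ((if (l : ℕ) < m then σ l else a0 : ℝ) : ℂ)) /
        (v + ((if (l : ℕ) < m then σ l else a0 : ℝ) : ℂ)) =
      ((u + (a0 : ℂ)) / (v + (a0 : ℂ))) ^ (N - m) *
        ∏ l ∈ Finset.range m, (u + (σ l : ℂ)) / (v + (σ l : ℂ)) := by
  rw [← prod_fin_ite_lt hm]
  refine Finset.prod_congr rfl fun l _ => ?_
  split_ifs <;> rfl

lemma integrableOn_Psi_weight_mul_add_pow_mul_pow (r ν0 : ℕ) (ν : Fin r → ℕ) (x a0 : ℝ)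
    (n k : ℕ) :
    IntegrableOn (fun u : ℝ =>
      ((u ^ ν0 * Real.exp (-u) * Psi r ν0 ν u x * (u + a0) ^ n : ℝ) : ℂ) * (u : ℂ) ^ k)
      (Set.Ioi 0) := by
  have hmoment (j : ℕ) : IntegrableOn (fun u : ℝ =>
      ((u ^ ν0 * Real.exp (-u) * Psi r ν0 ν u x : ℝ) : ℂ) * (u : ℂ) ^ j) (Set.Ioi 0) := by
    have h := (integrableOn_Psi_weight_mul_pow r ν0 ν x j).ofReal (𝕜 := ℂ)
    simpa only [IntegrableOn, Complex.coe_algebraMap, Complex.ofReal_mul, Complex.ofReal_pow]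
      using h
  have h := integrable_mul_polynomial_eval hmoment
    ((Polynomial.X + Polynomial.C (a0 : ℂ)) ^ n * Polynomial.X ^ k)
  simp only [Polynomial.eval_mul, Polynomial.eval_pow, Polynomial.eval_add, Polynomial.eval_X,
    Polynomial.eval_C, ← mul_assoc] at h
  simpa only [IntegrableOn, Complex.ofReal_mul, Complex.ofReal_pow, Complex.ofReal_add] using h

lemma ofReal_notMem_sphere_of_re_add_lt_zero {c : ℂ} {R : ℝ} (hc : c.re + R < 0) {u : ℝ}
    (hu : 0 ≤ u) : (u : ℂ) ∉ Metric.sphere c R := fun h => by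
  have hre := Complex.re_le_norm ((u : ℂ) - c)
  rw [mem_sphere_iff_norm.1 h, Complex.sub_re, Complex.ofReal_re] at hre
  linarith

lemma kernel_integrand_eq (r ν0 : ℕ) (ν : Fin r → ℕ) (a0 : ℝ) (n : ℕ) (u x y : ℝ) (v : ℂ) :
    (u : ℂ) ^ ν0 * Complex.exp (-(u : ℂ) + v) * ((Psi r ν0 ν u x : ℝ) : ℂ) *
        Phi r ν0 ν v y * ((u : ℂ) - v)⁻¹ * (((u : ℂ) + (a0 : ℂ)) / (v + (a0 : ℂ))) ^ n =
      ((u ^ ν0 * Real.exp (-u) * Psi r ν0 ν u x * (u + a0) ^ n : ℝ) : ℂ) *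
        (Complex.exp v * Phi r ν0 ν v y * ((v + (a0 : ℂ)) ^ n)⁻¹) * ((u : ℂ) - v)⁻¹ := by
  rw [Complex.exp_add, div_pow]
  push_cast
  ring

end Kernel

theorem cor_2_3_general (r ν0 N m : ℕ) (hm : m ≤ N) (ν : Fin r → ℕ) (a0 : ℝ) (σ : ℕ → ℝ)
    (cC : ℂ) (R : ℝ) (hR : 0 ≤ R)
    (hpos : ∀ u : ℝ, 0 ≤ u → (u : ℂ) ∉ Metric.sphere cC R)
    (ha0 : -(a0 : ℂ) ∉ Metric.sphere cC R) (hσ : ∀ j < m, -(σ j : ℂ) ∉ Metric.sphere cC R)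
    (x y : ℝ) (hy : 0 < y) :
    KN r ν0 N ν (fun i => if (i : ℕ) < m then σ i else a0) cC R x y =
      (∫ u in Set.Ioi (0 : ℝ),
        (2 * Real.pi * Complex.I)⁻¹ *
          ∮ v in C(cC, R),
            (u : ℂ) ^ ν0 * Complex.exp (-(u : ℂ) + v) * ((Psi r ν0 ν u x : ℝ) : ℂ) *
              Phi r ν0 ν v y * ((u : ℂ) - v)⁻¹ *
              (((u : ℂ) + (a0 : ℂ)) / (v + (a0 : ℂ))) ^ (N - m)) +
      ∑ k ∈ Finset.range m,
        ((∫ u in Set.Ioi (0 : ℝ),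
            u ^ ν0 * Real.exp (-u) * Psi r ν0 ν u x * (u + a0) ^ (N - m) *
              ∏ l ∈ Finset.range k, (u + σ l) : ℝ) : ℂ) *
          ((2 * Real.pi * Complex.I)⁻¹ *
            ∮ v in C(cC, R),
              Complex.exp v * Phi r ν0 ν v y * ((v + (a0 : ℂ)) ^ (N - m))⁻¹ *
                ∏ l ∈ Finset.range (k + 1), (v + (σ l : ℂ))⁻¹) := by
  have hF : ContinuousOn
      (fun v => Complex.exp v * Phi r ν0 ν v y * ((v + (a0 : ℂ)) ^ (N - m))⁻¹)
      (Metric.sphere cC R) := by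
    have hΦ := continuous_Phi r ν0 ν hy
    refine ContinuousOn.mul (by fun_prop) (ContinuousOn.inv₀ (by fun_prop) fun v hv => ?_)
    exact pow_ne_zero _ fun h => ha0 (eq_neg_of_add_eq_zero_left h ▸ hv)
  have hdecomp := integral_circleIntegral_cauchy_mul_prod_div measurableSet_Ioi hR
    (by simpa only [closure_Ioi, Set.mem_Ici] using hpos)
    (integrableOn_Psi_weight_mul_add_pow_mul_pow r ν0 ν x a0 (N - m)) hF m hσ
    (2 * Real.pi * Complex.I)⁻¹
  simp only [← kernel_integrand_eq] at hdecomp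
  simp only [KN, prod_add_div_add_ite_lt hm, ← mul_assoc, hdecomp, ← integral_complex_ofReal,
    Complex.ofReal_mul, Complex.ofReal_prod, Complex.ofReal_add]

/-- **Corollary 2.3** (decomposition of the kernel when all but `m` source parameters
coincide). -/
theorem cor_2_3 (r ν0 N m : ℕ) (hm : m < N) (ν : Fin r → ℕ)
    (a0 : ℝ) (ha0 : 0 < a0) (σ : ℕ → ℝ) (hσ : ∀ j < m, 0 < σ j)
    (cC : ℂ) (R : ℝ) (hR : 0 < R) (hleft : cC.re + R < 0)
    (hencl0 : ‖-(a0 : ℂ) - cC‖ < R)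
    (hencl : ∀ j < m, ‖-(σ j : ℂ) - cC‖ < R)
    (x y : ℝ) (hx : 0 < x) (hy : 0 < y) :
    KN r ν0 N ν (fun i => if (i : ℕ) < m then σ i else a0) cC R x y =
      (∫ u in Set.Ioi (0 : ℝ),
        (2 * Real.pi * Complex.I)⁻¹ *
          ∮ v in C(cC, R),
            (u : ℂ) ^ ν0 * Complex.exp (-(u : ℂ) + v) * ((Psi r ν0 ν u x : ℝ) : ℂ) *
              Phi r ν0 ν v y * ((u : ℂ) - v)⁻¹ *
              (((u : ℂ) + (a0 : ℂ)) / (v + (a0 : ℂ))) ^ (N - m)) +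
      ∑ k ∈ Finset.range m,
        ((∫ u in Set.Ioi (0 : ℝ),
            u ^ ν0 * Real.exp (-u) * Psi r ν0 ν u x * (u + a0) ^ (N - m) *
              ∏ l ∈ Finset.range k, (u + σ l) : ℝ) : ℂ) *
          ((2 * Real.pi * Complex.I)⁻¹ *
            ∮ v in C(cC, R),
              Complex.exp v * Phi r ν0 ν v y * ((v + (a0 : ℂ)) ^ (N - m))⁻¹ *
                ∏ l ∈ Finset.range (k + 1), (v + (σ l : ℂ))⁻¹) :=
  cor_2_3_general r ν0 N m hm.le ν a0 σ cC R hR.le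
    (fun _ => ofReal_notMem_sphere_of_re_add_lt_zero hleft)
    (fun h => hencl0.ne (mem_sphere_iff_norm.1 h))
    (fun j hj h => (hencl j hj).ne (mem_sphere_iff_norm.1 h)) x y hy

end
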